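/- arXiv:2503.20657 — 2 statements merged into one kernel-verified Lean document; each statement's English description precedes it below -/
import Mathlib

section
/- Let m ≥ 2 be an integer and let d₁, …, d_m ∈ (0,1), with indices taken modulo m (so d_{m+1} := d₁). Then ∏_{j=1}^{m} (1 − d_j d_{j+1})/(1 − d_j²) ≥ 1, and equality holds if and only if d₁ = d₂ = ⋯ = d_m. -/
/-- **Claim 3.3 (cyclic product inequality).** Let `m ≥ 2` and `d₁, …, d_m ∈ (0,1)`,
indices mod `m`. Then `∏_{j} (1 − d_j d_{j+1})/(1 − d_j²) ≥ 1`, with equality iff all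
`d_j` are equal. -/
theorem cyclic_product_ge_one (m : ℕ) [NeZero m] (hm : 2 ≤ m)
    (d : Fin m → ℝ) (hd : ∀ j, d j ∈ Set.Ioo (0 : ℝ) 1) :
    1 ≤ ∏ j : Fin m, (1 - d j * d (j + 1)) / (1 - d j ^ 2) ∧
    ((∏ j : Fin m, (1 - d j * d (j + 1)) / (1 - d j ^ 2)) = 1 ↔
      ∀ j k : Fin m, d j = d k) := by
  have hpos : ∀ j, 0 < 1 - d j ^ 2 := fun j => by
    obtain ⟨h0, h1⟩ := hd j
    nlinarith
  have hnum : ∀ j k, 0 < 1 - d j * d k := fun j k => by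
    obtain ⟨h0, h1⟩ := hd j
    obtain ⟨h2, h3⟩ := hd k
    nlinarith
  have hshift : ∏ j : Fin m, (1 - d (j + 1) ^ 2) = ∏ j : Fin m, (1 - d j ^ 2) :=
    Equiv.prod_comp (Equiv.addRight (1 : Fin m)) (fun j => 1 - d j ^ 2)
  have hB : 0 < ∏ j : Fin m, (1 - d j ^ 2) := Finset.prod_pos fun j _ => hpos j
  have hA : 0 < ∏ j : Fin m, (1 - d j * d (j + 1)) := Finset.prod_pos fun j _ => hnum j _
  have hB2 : (∏ j : Fin m, (1 - d j ^ 2)) ^ 2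
      = ∏ j : Fin m, ((1 - d j ^ 2) * (1 - d (j + 1) ^ 2)) := by
    rw [Finset.prod_mul_distrib, hshift, sq]
  have hA2 : (∏ j : Fin m, (1 - d j * d (j + 1))) ^ 2
      = ∏ j : Fin m, (1 - d j * d (j + 1)) ^ 2 := by
    rw [Finset.prod_pow]
  rw [Finset.prod_div_distrib, one_le_div hB, div_eq_one_iff_eq hB.ne']
  refine ⟨?_, ?_, ?_⟩
  · refine (pow_le_pow_iff_left₀ hB.le hA.le two_ne_zero).mp ?_
    rw [hA2, hB2]
    refine Finset.prod_le_prod (fun j _ => (mul_pos (hpos _) (hpos _)).le) fun j _ => ?_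
    nlinarith [sq_nonneg (d j - d (j + 1))]
  · intro h
    have hstep : ∀ j, d j = d (j + 1) := by
      by_contra! hne
      obtain ⟨i, hi⟩ := hne
      have : (∏ j : Fin m, (1 - d j ^ 2)) ^ 2 < (∏ j : Fin m, (1 - d j * d (j + 1))) ^ 2 := by
        rw [hA2, hB2]
        refine Finset.prod_lt_prod (fun j _ => mul_pos (hpos _) (hpos _)) (fun j _ => ?_)
          ⟨i, Finset.mem_univ _, ?_⟩
        · nlinarith [sq_nonneg (d j - d (j + 1))]
        · have := sq_pos_of_ne_zero (sub_ne_zero.mpr hi)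
          nlinarith
      rw [h] at this
      exact lt_irrefl _ this
    have key : ∀ n (hn : n < m), d ⟨n, hn⟩ = d ⟨0, by omega⟩ := by
      intro n
      induction n with
      | zero => intro _; rfl
      | succ n ih =>
        intro hn
        rw [← ih (by omega), hstep ⟨n, by omega⟩]
        congr 1
        apply Fin.ext
        rw [Fin.val_add, Fin.val_one', Nat.mod_eq_of_lt (show 1 < m by omega),
          Nat.mod_eq_of_lt hn]
    intro j k
    rw [key j.1 j.2, key k.1 k.2]
  · intro h
    refine Finset.prod_congr rfl fun j _ => ?_
    rw [h (j + 1) j, sq]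
end

section
/- Let r ∈ (0,1) and for each integer k ≥ 1 set α_k := k(1−r²)/r² − 1 (so that (α_k+1) r²/(1−r²) = k). Then the sequence λ_k := √(2π/α_k) · (1−r²)^{α_k−1} · (Γ(α_k + k + 2)/(Γ(α_k + 1) · k!)) · r^{2k+1} converges, as k → ∞, to 1/(1−r²)². -/
/-- Logarithmic Stirling remainder. -/
noncomputable def stirS (x : ℝ) : ℝ :=
  Real.log (Real.Gamma (x + 1)) - x * Real.log x + x - Real.log x / 2

theorem log_Gamma_feq {y : ℝ} (hy : 0 < y) :
    (Real.log ∘ Real.Gamma) (y + 1) = (Real.log ∘ Real.Gamma) y + Real.log y := by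
  simp only [Function.comp]
  rw [Real.Gamma_add_one hy.ne', Real.log_mul hy.ne' (Real.Gamma_pos_of_pos hy).ne', add_comm]

theorem stirS_nat : Filter.Tendsto (fun n : ℕ => stirS n) Filter.atTop
    (nhds (Real.log (2 * Real.pi) / 2)) := by
  have h := (Stirling.tendsto_stirlingSeq_sqrt_pi.log (by positivity)).add_const (Real.log 2 / 2)
  have e : Real.log (Real.sqrt Real.pi) + Real.log 2 / 2 = Real.log (2 * Real.pi) / 2 := by
    rw [Real.log_sqrt Real.pi_pos.le, Real.log_mul (by norm_num) Real.pi_pos.ne']; ring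
  rw [e] at h
  refine h.congr' ?_
  filter_upwards [Filter.eventually_gt_atTop 0] with n hn
  have hn' : (0 : ℝ) < n := by exact_mod_cast hn
  rw [Stirling.log_stirlingSeq_formula, stirS, Real.Gamma_nat_eq_factorial,
    Real.log_mul (by norm_num) hn'.ne', Real.log_div hn'.ne' (Real.exp_pos 1).ne', Real.log_exp]
  ring

theorem stirS_close (n : ℕ) (hn : 0 < n) (t : ℝ) (h0 : 0 ≤ t) (h1 : t ≤ 1) :
    |stirS (n + t) - stirS n| ≤ 3 / n := by
  have hn' : (0 : ℝ) < n := by exact_mod_cast hn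
  rcases h0.eq_or_lt with rfl | h0'
  · simp; positivity
  have up := Real.BohrMollerup.f_add_nat_le (n := n + 1) Real.convexOn_log_Gamma
    (fun {y} hy => log_Gamma_feq hy) (by omega) h0' h1
  have lo := Real.BohrMollerup.f_add_nat_ge (n := n + 1) Real.convexOn_log_Gamma
    (fun {y} hy => log_Gamma_feq hy) (by omega) h0'
  simp only [Function.comp, Nat.cast_add, Nat.cast_one, add_sub_cancel_right] at up lo
  have e1 : (n : ℝ) + 1 + t = n + t + 1 := by ring
  rw [e1] at up lo
  have hx : 0 < (n : ℝ) + t := by positivity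
  -- log (n+1) - log n ≤ 1/n
  have a1 : Real.log (n + 1) - Real.log n ≤ 1 / n := by
    rw [← Real.log_div (by positivity) hn'.ne']
    have := Real.log_le_sub_one_of_pos (x := ((n : ℝ) + 1) / n) (by positivity)
    have e : ((n : ℝ) + 1) / n - 1 = 1 / n := by field_simp; ring
    linarith
  have a2 : Real.log (n + t) - Real.log n ≤ t / n := by
    rw [← Real.log_div hx.ne' hn'.ne']
    have := Real.log_le_sub_one_of_pos (x := ((n : ℝ) + t) / n) (by positivity)
    have e : ((n : ℝ) + t) / n - 1 = t / n := by field_simp; ring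
    linarith
  have a3 : t / (n + t) ≤ Real.log (n + t) - Real.log n := by
    have := Real.log_le_sub_one_of_pos (x := (n : ℝ) / (n + t)) (by positivity)
    rw [Real.log_div hn'.ne' hx.ne'] at this
    have e : (n : ℝ) / (n + t) - 1 = - (t / (n + t)) := by field_simp; ring
    linarith
  have hinv : 0 < 1 / (n : ℝ) := by positivity
  have b1 : t * Real.log (n + 1) ≤ t * Real.log n + 1 / n := by
    have : t * (Real.log (n + 1) - Real.log n) ≤ t * (1 / n) :=
      mul_le_mul_of_nonneg_left a1 h0
    have : t * (1 / (n : ℝ)) ≤ 1 * (1 / n) := mul_le_mul_of_nonneg_right h1 hinv.le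
    linarith
  have c1 : (n + t + 1 / 2) * (Real.log (n + t) - Real.log n) ≤ t + 2 / n := by
    have h2 : (n + t + 1 / 2) * (Real.log (n + t) - Real.log n) ≤ (n + t + 1 / 2) * (t / n) :=
      mul_le_mul_of_nonneg_left a2 (by positivity)
    have e : ((n : ℝ) + t + 1 / 2) * (t / n) = t + (t * t + t / 2) / n := by field_simp; ring
    have : (t * t + t / 2) / n ≤ 2 / (n : ℝ) := by
      gcongr; nlinarith
    linarith
  have c2 : t ≤ (n + t + 1 / 2) * (Real.log (n + t) - Real.log n) := by
    have h2 : (n + t + 1 / 2) * (t / (n + t)) ≤ (n + t + 1 / 2) * (Real.log (n + t) - Real.log n) :=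
      mul_le_mul_of_nonneg_left a3 (by positivity)
    have e : ((n : ℝ) + t + 1 / 2) * (t / (n + t)) = t + t / 2 / (n + t) := by field_simp
    have : 0 ≤ t / 2 / (n + t) := by positivity
    linarith
  have d3 : 3 / (n : ℝ) = 3 * (1 / n) := by ring
  have d2 : 2 / (n : ℝ) = 2 * (1 / n) := by ring
  rw [d2] at c1
  rw [d3, abs_le]
  unfold stirS
  constructor <;> nlinarith

theorem stirS_tendsto : Filter.Tendsto stirS Filter.atTop
    (nhds (Real.log (2 * Real.pi) / 2)) := by
  have hf : Filter.Tendsto (fun x : ℝ => ⌊x⌋₊) Filter.atTop Filter.atTop :=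
    tendsto_nat_floor_atTop
  have h1 := stirS_nat.comp hf
  have h3 : Filter.Tendsto (fun n : ℕ => 3 / (n : ℝ)) Filter.atTop (nhds 0) :=
    tendsto_const_div_atTop_nhds_zero_nat 3
  have h2 : Filter.Tendsto (fun x : ℝ => stirS x - stirS (⌊x⌋₊ : ℝ)) Filter.atTop (nhds 0) := by
    refine squeeze_zero_norm' ?_ (h3.comp hf)
    filter_upwards [Filter.eventually_ge_atTop 1] with x hx
    have := stirS_close ⌊x⌋₊ (Nat.floor_pos.mpr hx) (x - ⌊x⌋₊)
      (sub_nonneg.mpr (Nat.floor_le (by linarith))) (by linarith [Nat.lt_floor_add_one x])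
    simpa using this
  have := h1.add h2
  simpa using this

/-- **Limit of the largest eigenvalue.** For `r ∈ (0,1)` and
`α_k := k(1−r²)/r² − 1` (so that `(α_k+1) r²/(1−r²) = k`), the eigenvalues
`λ_k = √(2π/α_k) (1−r²)^{α_k−1} (Γ(α_k+k+2)/(Γ(α_k+1) k!)) r^{2k+1}` of the
normalized Toeplitz operator converge to `1/(1−r²)²` as `k → ∞`. -/
theorem largest_eigenvalue_limit (r : ℝ) (hr : r ∈ Set.Ioo (0 : ℝ) 1) :
    Filter.Tendsto
      (fun k : ℕ =>
        let α : ℝ := k * (1 - r ^ 2) / r ^ 2 - 1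
        Real.sqrt (2 * Real.pi / α) * (1 - r ^ 2) ^ (α - 1) *
          (Real.Gamma (α + k + 2) / (Real.Gamma (α + 1) * k.factorial)) *
          r ^ (2 * k + 1))
      Filter.atTop (nhds (1 / (1 - r ^ 2) ^ 2)) := by
  obtain ⟨hr0, hr1⟩ := hr
  have hs : 0 < 1 - r ^ 2 := by nlinarith
  have hk : Filter.Tendsto (fun k : ℕ => (k : ℝ)) Filter.atTop Filter.atTop :=
    tendsto_natCast_atTop_atTop
  have hN : Filter.Tendsto (fun k : ℕ => (k : ℝ) / r ^ 2) Filter.atTop Filter.atTop :=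
    hk.atTop_div_const (by positivity)
  have hx : Filter.Tendsto (fun k : ℕ => (k : ℝ) / r ^ 2 * (1 - r ^ 2))
      Filter.atTop Filter.atTop := hN.atTop_mul_const hs
  have hq : Filter.Tendsto (fun x : ℝ => Real.log (1 - x⁻¹)) Filter.atTop (nhds 0) := by
    have : Filter.Tendsto (fun x : ℝ => 1 - x⁻¹) Filter.atTop (nhds (1 - 0)) :=
      tendsto_inv_atTop_zero.const_sub 1
    rw [sub_zero] at this
    simpa using this.log one_ne_zero
  have key := ((((stirS_tendsto.comp hN).sub (stirS_tendsto.comp hx)).sub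
    (stirS_tendsto.comp hk)).add_const
      (Real.log (2 * Real.pi) / 2 - 2 * Real.log (1 - r ^ 2))).sub ((hq.comp hx).div_const 2)
  have key2 := (Real.continuous_exp.tendsto _).comp key
  have e : Real.exp (Real.log (2 * Real.pi) / 2 - Real.log (2 * Real.pi) / 2
      - Real.log (2 * Real.pi) / 2 + (Real.log (2 * Real.pi) / 2 - 2 * Real.log (1 - r ^ 2))
      - 0 / 2) = 1 / (1 - r ^ 2) ^ 2 := by
    have : Real.log (2 * Real.pi) / 2 - Real.log (2 * Real.pi) / 2
      - Real.log (2 * Real.pi) / 2 + (Real.log (2 * Real.pi) / 2 - 2 * Real.log (1 - r ^ 2))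
      - 0 / 2 = Real.log (1 / (1 - r ^ 2) ^ 2) := by
      rw [one_div, Real.log_inv, Real.log_pow]; push_cast; ring
    rw [this, Real.exp_log (by positivity)]
  rw [e] at key2
  refine key2.congr' ?_
  filter_upwards [Filter.eventually_gt_atTop 0, hx.eventually_gt_atTop 1] with k hk0 hx1
  have hkp : (0 : ℝ) < k := by exact_mod_cast hk0
  simp only [Function.comp]
  have hkN : (k : ℝ) = k / r ^ 2 * r ^ 2 := by field_simp
  have hα : (k : ℝ) * (1 - r ^ 2) / r ^ 2 - 1 = k / r ^ 2 * (1 - r ^ 2) - 1 := by ring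
  have hα2 : (k : ℝ) / r ^ 2 * (1 - r ^ 2) - 1 + k + 2 = k / r ^ 2 + 1 := by field_simp; ring
  have hNp : 0 < (k : ℝ) / r ^ 2 := by positivity
  rw [hα, hα2, sub_add_cancel]
  have hfac : Real.log (k.factorial : ℝ) = Real.log (Real.Gamma (k + 1)) := by
    rw [Real.Gamma_nat_eq_factorial]
  have hfp : (0 : ℝ) < k.factorial := by exact_mod_cast k.factorial_pos
  have hlk : Real.log k = Real.log (k / r ^ 2) + 2 * Real.log r := by
    conv_lhs => rw [hkN]
    rw [Real.log_mul hNp.ne' (by positivity), Real.log_pow]; push_cast; ring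
  have hlx : Real.log (k / r ^ 2 * (1 - r ^ 2)) = Real.log (k / r ^ 2) + Real.log (1 - r ^ 2) :=
    Real.log_mul hNp.ne' hs.ne'
  set N : ℝ := k / r ^ 2 with hNdef
  set x : ℝ := N * (1 - r ^ 2) with hxdef
  have hxp : 0 < x := by linarith
  have hx1' : 0 < x - 1 := by linarith
  have g1 := Real.Gamma_pos_of_pos (show 0 < N + 1 by linarith)
  have g2 := Real.Gamma_pos_of_pos hxp
  have hGx : Real.log (Real.Gamma (x + 1)) = Real.log (Real.Gamma x) + Real.log x :=
    log_Gamma_feq hxp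
  have hq' : Real.log (1 - x⁻¹) = Real.log (x - 1) - Real.log x := by
    rw [← Real.log_div hx1'.ne' hxp.ne']; congr 1; field_simp
  have p1 : 0 < Real.sqrt (2 * Real.pi / (x - 1)) :=
    Real.sqrt_pos.mpr (by have := Real.pi_pos; positivity)
  have p2 : 0 < (1 - r ^ 2) ^ (x - 1 - 1) := Real.rpow_pos_of_pos hs _
  have p3 : 0 < Real.Gamma (N + 1) / (Real.Gamma x * k.factorial) := by positivity
  have p4 : 0 < r ^ (2 * k + 1) := by positivity
  rw [← Real.exp_log (mul_pos (mul_pos (mul_pos p1 p2) p3) p4)]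
  congr 1
  rw [Real.log_mul (by positivity) p4.ne', Real.log_mul (by positivity) p3.ne',
    Real.log_mul p1.ne' p2.ne', Real.log_sqrt (by have := Real.pi_pos; positivity),
    Real.log_div (by have := Real.pi_pos; positivity) hx1'.ne', Real.log_rpow hs,
    Real.log_div g1.ne' (by positivity), Real.log_mul g2.ne' hfp.ne', Real.log_pow, hfac, hq']
  unfold stirS
  rw [hGx, hlk, hlx]
  push_cast
  have hkx : (k : ℝ) = N - x := by rw [hxdef]; linarith
  generalize Real.log (Real.Gamma (k + 1)) = G
  rw [hkx]
  ring
end
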